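/- Let N_p0 be an odd integer with 1 ≤ N_p0 ≤ 3^{m-1} and set χ = χ(N_p0). Define the vector p' = (p'_0, …, p'_{m-1}) by p'_i = Σ_{s=0}^{i} 3^s − (N_p0 − 1)/2 if i = χ; p'_i = 3·((N_p0 − 1)/2 − Σ_{s=0}^{i-2} 3^s) if i = χ + 1 and χ + 1 ≤ m − 1; and p'_i = 0 otherwise. Then p' ∈ Ω(N_p0), and for every p ∈ Ω(N_p0) one has C_sum(p) ≤ C_sum(p'); i.e., p' is the optimal pilot assignment vector maximizing C_sum under the pilot-length constraint N_pil(p) = N_p0 (Theorem 1). -/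

import Mathlib

/-! Write `c = χ(N)`, i.e. `3^c ≤ N < 3^(c+1)`. With weights `w_i = p_i / 3^i`, validity says
`Σ w_i = 1`, the length constraint says `Σ w_i · 3^i = N`, and
`C_sum(p) = C_0 + d · Σ w_i · i`. Since `i` is a concave function of `3^i`, it lies below the
chord `ℓ(i) = c + (3^i - 3^c) / (2 · 3^c)` through the consecutive nodes `c` and `c + 1`
(`le_chord`). The sum `Σ w_i · ℓ(i)` takes the same value for every valid vector of length `N`
(`sum_chord`), which bounds `C_sum(p)`; the vector `p'` attains the bound because it is supported
on `{c, c + 1}`, where `ℓ(i) = i`. -/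

/-- A pilot assignment vector `p = (p_0, …, p_{m-1})` is valid if `0 ≤ p_i ≤ 3^i`
for every `i` and `Σ_i p_i · 3^{-i} = 1`. -/
def validP {m : ℕ} (p : Fin m → ℤ) : Prop :=
  (∀ i, 0 ≤ p i ∧ p i ≤ 3 ^ (i : ℕ)) ∧
  (∑ i, (p i : ℝ) / 3 ^ (i : ℕ)) = 1

/-- The pilot length `N_pil(p) = Σ_i p_i`. -/
def Npil {m : ℕ} (p : Fin m → ℤ) : ℤ := ∑ i, p i

/-- The per-cell sum rate `C_sum(p) = Σ_i 3^{-i}·p_i·C_i` with `C_i = C_0 + i·d`. -/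
noncomputable def Csum {m : ℕ} (C0 d : ℝ) (p : Fin m → ℤ) : ℝ :=
  ∑ i, (p i : ℝ) / 3 ^ (i : ℕ) * (C0 + (i : ℕ) * d)

/-- `χ(N_p0) = min{k ∈ ℕ : Σ_{i=0}^{k} 3^i > (N_p0 - 1)/2}`. -/
noncomputable def chiN (N : ℤ) : ℕ :=
  sInf {k : ℕ | (N - 1) / 2 < ∑ i ∈ Finset.range (k + 1), (3 : ℤ) ^ i}

/-- The closed-form optimal pilot assignment vector of Theorem 1:
`p'_i = Σ_{s=0}^{i} 3^s - (N-1)/2` if `i = χ(N)`,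
`p'_i = 3·((N-1)/2 - Σ_{s=0}^{i-2} 3^s)` if `i = χ(N) + 1 ≤ m-1`,
and `p'_i = 0` otherwise. -/
noncomputable def popt (m : ℕ) (N : ℤ) : Fin m → ℤ := fun i =>
  if (i : ℕ) = chiN N then (∑ s ∈ Finset.range (chiN N + 1), 3 ^ s) - (N - 1) / 2
  else if (i : ℕ) = chiN N + 1 then
    3 * ((N - 1) / 2 - ∑ s ∈ Finset.range (chiN N), 3 ^ s)
  else 0

/-- The affine function of `3^i` that agrees with `i` at `i = c` and `i = c + 1`. -/
noncomputable def chord (c i : ℕ) : ℝ := c + ((3 : ℝ) ^ i - 3 ^ c) / (2 * 3 ^ c)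

lemma one_add_two_mul_le_three_pow (k : ℕ) : 1 + 2 * (k : ℝ) ≤ 3 ^ k := by
  have h := one_add_mul_le_pow (a := (2 : ℝ)) (by norm_num) k
  norm_num at h
  linarith

/-- Concavity of `i` as a function of `3^i`, at integer nodes. -/
lemma le_chord (c i : ℕ) : (i : ℝ) ≤ chord c i := by
  have hc : (0 : ℝ) < 3 ^ c := by positivity
  suffices h : ((i : ℝ) - c) * (2 * 3 ^ c) ≤ 3 ^ i - 3 ^ c by
    have := (le_div_iff₀ (by positivity : (0 : ℝ) < 2 * 3 ^ c)).2 h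
    unfold chord
    linarith
  rcases le_total c i with h | h
  · obtain ⟨k, rfl⟩ := Nat.exists_eq_add_of_le h
    have := mul_le_mul_of_nonneg_left (one_add_two_mul_le_three_pow k) hc.le
    push_cast
    rw [pow_add]
    linarith
  · obtain ⟨k, rfl⟩ := Nat.exists_eq_add_of_le h
    have hi : (0 : ℝ) < 3 ^ i := by positivity
    -- after division by `3^i` the claim is `3^k ≤ 1 + 2 * k * 3^k`
    have hk : (3 : ℝ) ^ k ≤ 1 + 2 * k * 3 ^ k := by
      rcases Nat.eq_zero_or_pos k with rfl | hk
      · simp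
      · have h1 : (1 : ℝ) ≤ k := by exact_mod_cast hk
        have h3 : (0 : ℝ) < 3 ^ k := by positivity
        nlinarith
    have := mul_le_mul_of_nonneg_left hk hi.le
    push_cast
    rw [pow_add]
    linarith

lemma chord_self (c : ℕ) : chord c c = c := by simp [chord]

lemma chord_succ (c : ℕ) : chord c (c + 1) = c + 1 := by
  have hc : (3 : ℝ) ^ c ≠ 0 := by positivity
  unfold chord
  rw [pow_succ]
  field_simp
  ring

/-- The chord sum depends only on the pilot length. -/
lemma sum_chord {m : ℕ} (C0 d : ℝ) (c : ℕ) (p : Fin m → ℤ) (hp : validP p) :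
    ∑ i, (p i : ℝ) / 3 ^ (i : ℕ) * (C0 + chord c i * d) =
      C0 + (c - 1 / 2) * d + Npil p * (d / (2 * 3 ^ c)) := by
  have hc : (3 : ℝ) ^ c ≠ 0 := by positivity
  have hterm : ∀ i : Fin m, (p i : ℝ) / 3 ^ (i : ℕ) * (C0 + chord c i * d) =
      (p i : ℝ) / 3 ^ (i : ℕ) * (C0 + (c - 1 / 2) * d) + p i * (d / (2 * 3 ^ c)) := by
    intro i
    have hi : (3 : ℝ) ^ (i : ℕ) ≠ 0 := by positivity
    unfold chord
    field_simp
    ring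
  rw [Finset.sum_congr rfl fun i _ => hterm i, Finset.sum_add_distrib, ← Finset.sum_mul,
    ← Finset.sum_mul, hp.2, one_mul, Npil]
  push_cast
  rfl

lemma two_mul_geom_three (k : ℕ) : 2 * ∑ s ∈ Finset.range k, (3 : ℤ) ^ s = 3 ^ k - 1 := by
  induction k with
  | zero => simp
  | succ k ih => rw [Finset.sum_range_succ, mul_add, ih, pow_succ]; ring

/-- For `N = 2K + 1` the defining minimality of `χ(N)` reads `3^χ ≤ N < 3^(χ+1)`. -/
lemma chiN_spec (K : ℤ) (hK : 0 ≤ K) :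
    3 ^ chiN (2 * K + 1) ≤ 2 * K + 1 ∧ 2 * K + 1 < 3 ^ (chiN (2 * K + 1) + 1) := by
  have hhalf : (2 * K + 1 - 1) / 2 = K := by omega
  have hset : chiN (2 * K + 1) = sInf {k : ℕ | 2 * K + 1 < (3 : ℤ) ^ (k + 1)} := by
    unfold chiN
    congr 1
    ext k
    have := two_mul_geom_three (k + 1)
    simp only [Set.mem_setOf_eq, hhalf]
    constructor <;> intro h <;> linarith
  have hne : {k : ℕ | 2 * K + 1 < (3 : ℤ) ^ (k + 1)}.Nonempty := by
    refine ⟨(2 * K + 1).toNat, ?_⟩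
    have h : (2 * K + 1).toNat + 1 < 3 ^ ((2 * K + 1).toNat + 1) := Nat.lt_pow_self (by norm_num)
    have h' : (((2 * K + 1).toNat + 1 : ℕ) : ℤ) < 3 ^ ((2 * K + 1).toNat + 1) := by exact_mod_cast h
    simp only [Set.mem_setOf_eq]
    push_cast at h'
    omega
  rw [hset]
  refine ⟨?_, Nat.sInf_mem hne⟩
  rcases hc : sInf {k : ℕ | 2 * K + 1 < (3 : ℤ) ^ (k + 1)} with _ | c
  · simp only [pow_zero]; omega
  · have hlt : c < sInf {k : ℕ | 2 * K + 1 < (3 : ℤ) ^ (k + 1)} := by omega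
    exact not_lt.1 (Nat.notMem_of_lt_sInf hlt)

/-- A vector supported on `{c, c + 1}`, possibly cut off at `m = c + 1` where its second entry
vanishes, is summed by its two entries. -/
lemma sum_two_point (m c : ℕ) (a b : ℤ) (hc : c < m) (hb : c + 1 < m ∨ b = 0) (F : ℕ → ℝ) :
    ∑ i : Fin m, ((if (i : ℕ) = c then a else if (i : ℕ) = c + 1 then b else 0 : ℤ) : ℝ) * F i =
      a * F c + b * F (c + 1) := by
  rw [Fin.sum_univ_eq_sum_range
    (fun i : ℕ => ((if i = c then a else if i = c + 1 then b else 0 : ℤ) : ℝ) * F i) m]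
  have hterm : ∀ i : ℕ, ((if i = c then a else if i = c + 1 then b else 0 : ℤ) : ℝ) * F i =
      (if i = c then a * F c else 0) + (if i = c + 1 then b * F (c + 1) else 0) := by
    intro i
    by_cases h : i = c
    · simp [h]
    · by_cases h' : i = c + 1
      · simp [h']
      · simp [h, h']
  rw [Finset.sum_congr rfl fun i _ => hterm i, Finset.sum_add_distrib, Finset.sum_ite_eq',
    Finset.sum_ite_eq', if_pos (Finset.mem_range.2 hc)]
  rcases hb with hb | rfl
  · rw [if_pos (Finset.mem_range.2 hb)]
  · simp

/-- `p'` is a valid pilot assignment of length `N = 2K + 1`. -/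
lemma popt_mem (m : ℕ) (hm : 2 ≤ m) (K : ℤ) (hK : 0 ≤ K) (h2 : 2 * K + 1 ≤ 3 ^ (m - 1)) :
    validP (popt m (2 * K + 1)) ∧ Npil (popt m (2 * K + 1)) = 2 * K + 1 := by
  obtain ⟨hlo, hhi⟩ := chiN_spec K hK
  have hhalf : (2 * K + 1 - 1) / 2 = K := by omega
  unfold popt
  rw [hhalf]
  generalize chiN (2 * K + 1) = c at *
  have hS := two_mul_geom_three c
  have hS' := two_mul_geom_three (c + 1)
  generalize ∑ s ∈ Finset.range c, (3 : ℤ) ^ s = S at *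
  generalize ∑ s ∈ Finset.range (c + 1), (3 : ℤ) ^ s = S' at *
  have hpow : (3 : ℤ) ^ (c + 1) = 3 * 3 ^ c := by rw [pow_succ]; ring
  have hcm : c ≤ m - 1 :=
    (pow_le_pow_iff_right₀ (by norm_num : (1 : ℤ) < 3)).1 (hlo.trans h2)
  -- `c + 1` falls outside the index range only for `N = 3^(m-1)`
  have hb : c + 1 < m ∨ 3 * (K - S) = 0 := by
    rcases hcm.lt_or_eq with h | h
    · left; omega
    · right; rw [← h] at h2; omega
  have hsum := sum_two_point m c (S' - K) (3 * (K - S)) (by omega) hb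
  refine ⟨⟨fun i => ?_, ?_⟩, ?_⟩
  · dsimp only
    split_ifs with h h'
    · rw [h]; constructor <;> omega
    · rw [h']; constructor <;> omega
    · exact ⟨le_rfl, by positivity⟩
  · have h := hsum fun i => ((3 : ℝ) ^ i)⁻¹
    simp only [← div_eq_mul_inv] at h
    rw [h]
    have hz : (S' - K) * 3 + 3 * (K - S) = 3 ^ (c + 1) := by omega
    have hr : (((S' - K : ℤ)) : ℝ) * 3 + ((3 * (K - S) : ℤ) : ℝ) = 3 ^ (c + 1) := by
      exact_mod_cast hz
    have hc0 : (3 : ℝ) ^ c ≠ 0 := by positivity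
    rw [pow_succ] at hr ⊢
    field_simp
    linarith
  · have h := hsum fun _ => 1
    simp only [mul_one] at h
    have hz : (S' - K) + 3 * (K - S) = 2 * K + 1 := by omega
    unfold Npil
    rw [← hz]
    exact_mod_cast h

/-- Theorem 1: for odd `N_p0` with `1 ≤ N_p0 ≤ 3^{m-1}`, the closed-form vector
`p'` belongs to `Ω(N_p0)` and maximizes `C_sum` over `Ω(N_p0)`. -/
theorem theorem1_optimal_fixed_length (m : ℕ) (hm : 2 ≤ m)
    (C0 d : ℝ) (hC0 : 0 < C0) (hd : 0 < d)
    (Np0 : ℤ) (hodd : Odd Np0) (h1 : 1 ≤ Np0) (h2 : Np0 ≤ 3 ^ (m - 1)) :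
    (validP (popt m Np0) ∧ Npil (popt m Np0) = Np0) ∧
    ∀ p : Fin m → ℤ, validP p → Npil p = Np0 →
      Csum C0 d p ≤ Csum C0 d (popt m Np0) := by
  obtain ⟨K, rfl⟩ := hodd
  obtain ⟨hv, hN⟩ := popt_mem m hm K (by omega) h2
  refine ⟨⟨hv, hN⟩, fun p hp hpN => ?_⟩
  set c := chiN (2 * K + 1) with hc
  calc Csum C0 d p
      ≤ ∑ i, (p i : ℝ) / 3 ^ (i : ℕ) * (C0 + chord c i * d) := by
        refine Finset.sum_le_sum fun i _ => mul_le_mul_of_nonneg_left ?_ ?_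
        · have := mul_le_mul_of_nonneg_right (le_chord c i) hd.le
          linarith
        · have : (0 : ℝ) ≤ p i := by exact_mod_cast (hp.1 i).1
          positivity
    _ = ∑ i, (popt m (2 * K + 1) i : ℝ) / 3 ^ (i : ℕ) * (C0 + chord c i * d) := by
        rw [sum_chord C0 d c p hp, sum_chord C0 d c _ hv, hpN, hN]
    _ = Csum C0 d (popt m (2 * K + 1)) := by
        refine Finset.sum_congr rfl fun i _ => ?_
        by_cases h : (i : ℕ) = c
        · rw [h, chord_self]
        · by_cases h' : (i : ℕ) = c + 1
          · rw [h', chord_succ]; push_cast; rfl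
          · have : popt m (2 * K + 1) i = 0 := by
              unfold popt
              rw [if_neg h, if_neg h']
            simp [this]
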